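/- arXiv:2407.08587 — 7 statements merged into one kernel-verified Lean document; each statement's English description precedes it below -/
import Mathlib

section
/- Consider the finite state space S = {0,1,…,b_max} × {0,1,…,Δ_max} × {0,1} of the QVAoI status-update MDP, with b_max ≥ 1 and Δ_max ≥ 1, and parameters β, q, p_t ∈ (0,1) and p_s ∈ (0,1]. Then for any two states s = (b,Δ,r) and s′ = (b′,Δ′,r′) in S, there exist n ≥ 1, a sequence of actions a_0,…,a_{n−1} ∈ {0,1}, and a sequence of states s_0 = s, s_1, …, s_n = s′ in S such that P(s_{i+1} | s_i, a_i) > 0 for every i = 0,…,n−1. (Consequently the MDP is weakly accessible, with an empty set of transient states.) -/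
/-!
STATEMENT 0: The QVAoI status-update MDP is weakly accessible: any state `s'` in the
finite state space `S = {0,…,b_max} × {0,…,Δ_max} × {0,1}` can be reached from any
state `s` in `S` by a finite sequence of actions, each step having positive one-step
transition probability.
-/

/-- Realized action: `d = a` if the battery is nonempty and there is a query, else `0`. -/
def realizedAction (s : ℕ × ℕ × ℕ) (a : ℕ) : ℕ :=
  if s.1 ≠ 0 ∧ s.2.2 = 1 then a else 0

/-- Deterministic next state given the realizations `e` (energy arrival), `c` (channel
success), `z` (version generation) and `r'` (next query indicator). -/
def nextState (bmax Δmax : ℕ) (s : ℕ × ℕ × ℕ) (a e c z r' : ℕ) : ℕ × ℕ × ℕ :=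
  let d := realizedAction s a
  (min (s.1 + e - d) bmax,
   if d = 1 ∧ c = 1 then z else min (s.2.1 + z) Δmax,
   r')

/-- One-step transition probability `P(s' | s, a)` of the QVAoI MDP, obtained by summing
over the independent Bernoulli realizations `e ~ Ber(β)`, `c ~ Ber(p_s)`, `z ~ Ber(p_t)`
and `r' ~ Ber(q)`. -/
def transProb (β ps pt q : ℝ) (bmax Δmax : ℕ) (s : ℕ × ℕ × ℕ) (a : ℕ)
    (s' : ℕ × ℕ × ℕ) : ℝ :=
  ∑ e ∈ Finset.range 2, ∑ c ∈ Finset.range 2, ∑ z ∈ Finset.range 2, ∑ r' ∈ Finset.range 2,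
    (if e = 1 then β else 1 - β) * (if c = 1 then ps else 1 - ps) *
    (if z = 1 then pt else 1 - pt) * (if r' = 1 then q else 1 - q) *
    (if s' = nextState bmax Δmax s a e c z r' then 1 else 0)

/-- Membership in the finite state space `S`. -/
def inStateSpace (bmax Δmax : ℕ) (s : ℕ × ℕ × ℕ) : Prop :=
  s.1 ≤ bmax ∧ s.2.1 ≤ Δmax ∧ s.2.2 ≤ 1

/-!
The state `(0, 0, 1)` is a hub. From any state, wait for an energy arrival and a query and then
transmit: this resets the version age, and transmitting with neither arrivals nor new versions
drains the battery to `(0, 0, 1)`. From the hub, any state is reached by staying idle, since the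
battery level and the version age can then be incremented one at a time.
-/

open Relation

theorem exists_seq_of_transGen {α : Type*} {R : α → α → Prop} {x y : α} (h : TransGen R x y) :
    ∃ n : ℕ, 1 ≤ n ∧ ∃ p : ℕ → α, p 0 = x ∧ p n = y ∧ ∀ i < n, R (p i) (p (i + 1)) := by
  induction h using TransGen.head_induction_on with
  | @single x hxy =>
    refine ⟨1, le_rfl, fun | 0 => x | _ + 1 => y, rfl, rfl, fun i hi => ?_⟩
    obtain rfl : i = 0 := by lia
    exact hxy
  | @head x w hxw _ ih =>
    obtain ⟨n, -, p, rfl, hpn, hp⟩ := ih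
    refine ⟨n + 1, by lia, fun | 0 => x | i + 1 => p i, rfl, hpn, ?_⟩
    rintro (_ | i) hi
    · exact hxw
    · exact hp i (by lia)

theorem transProb_nextState_pos {β ps pt q : ℝ} (hβ : 0 < β ∧ β < 1) (hps : 0 < ps ∧ ps ≤ 1)
    (hpt : 0 < pt ∧ pt < 1) (hq : 0 < q ∧ q < 1) (bmax Δmax : ℕ) (s : ℕ × ℕ × ℕ) (a : ℕ)
    {e z r' : ℕ} (he : e ≤ 1) (hz : z ≤ 1) (hr' : r' ≤ 1) :
    0 < transProb β ps pt q bmax Δmax s a (nextState bmax Δmax s a e 1 z r') := by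
  obtain ⟨hβ₀, hβ₁⟩ := hβ
  obtain ⟨hps₀, hps₁⟩ := hps
  obtain ⟨hpt₀, hpt₁⟩ := hpt
  obtain ⟨hq₀, hq₁⟩ := hq
  rw [← sub_pos] at hβ₁ hpt₁ hq₁
  rw [← sub_nonneg] at hps₁
  have mem_range_two {k : ℕ} (hk : k ≤ 1) : k ∈ Finset.range 2 :=
    Finset.mem_range.2 (Nat.lt_succ_of_le hk)
  unfold transProb
  refine Finset.sum_pos' (fun _ _ => by positivity) ⟨e, mem_range_two he, ?_⟩
  refine Finset.sum_pos' (fun _ _ => by positivity) ⟨1, mem_range_two le_rfl, ?_⟩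
  refine Finset.sum_pos' (fun _ _ => by positivity) ⟨z, mem_range_two hz, ?_⟩
  refine Finset.sum_pos' (fun _ _ => by positivity) ⟨r', mem_range_two hr', ?_⟩
  rw [if_pos (rfl : 1 = 1), if_pos rfl]
  positivity

/-- The transition graph of the MDP: `t` is the successor of `s` under some action and some
outcome of the random variables. The channel is taken to succeed, because failure has probability
zero when `p_s = 1`. -/
def PossibleStep (bmax Δmax : ℕ) (s t : ℕ × ℕ × ℕ) : Prop :=
  ∃ a ≤ 1, ∃ e ≤ 1, ∃ z ≤ 1, ∃ r' ≤ 1, t = nextState bmax Δmax s a e 1 z r'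

namespace PossibleStep

variable {bmax Δmax b Δ r e z r' : ℕ} {s t : ℕ × ℕ × ℕ}

theorem exists_transProb_pos {β ps pt q : ℝ} (hβ : 0 < β ∧ β < 1) (hps : 0 < ps ∧ ps ≤ 1)
    (hpt : 0 < pt ∧ pt < 1) (hq : 0 < q ∧ q < 1) (h : PossibleStep bmax Δmax s t) :
    ∃ a ≤ 1, 0 < transProb β ps pt q bmax Δmax s a t := by
  obtain ⟨a, ha, e, he, z, hz, r', hr', rfl⟩ := h
  exact ⟨a, ha, transProb_nextState_pos hβ hps hpt hq bmax Δmax s a he hz hr'⟩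

theorem inStateSpace_right (hΔmax : 1 ≤ Δmax) (h : PossibleStep bmax Δmax s t) :
    inStateSpace bmax Δmax t := by
  obtain ⟨a, -, e, -, z, hz, r', hr', rfl⟩ := h
  refine ⟨min_le_right _ _, ?_, hr'⟩
  simp only [nextState]
  split_ifs
  · exact hz.trans hΔmax
  · exact min_le_right _ _

theorem idle (bmax Δmax b Δ r : ℕ) (he : e ≤ 1) (hz : z ≤ 1) (hr' : r' ≤ 1) :
    PossibleStep bmax Δmax (b, Δ, r) (min (b + e) bmax, min (Δ + z) Δmax, r') :=
  ⟨0, zero_le_one, e, he, z, hz, r', hr', by simp [nextState, realizedAction]⟩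

theorem transmit (bmax Δmax b Δ : ℕ) (he : e ≤ 1) (hz : z ≤ 1) (hr' : r' ≤ 1) :
    PossibleStep bmax Δmax (b + 1, Δ, 1) (min (b + e) bmax, z, r') :=
  ⟨1, le_rfl, e, he, z, hz, r', hr', by simp [nextState, realizedAction, Nat.add_right_comm]⟩

theorem charge (hb : b < bmax) (hΔ : Δ ≤ Δmax) (hr : r ≤ 1) :
    PossibleStep bmax Δmax (b, Δ, r) (b + 1, Δ, r) := by
  simpa [hΔ, Nat.succ_le_of_lt hb] using idle bmax Δmax b Δ r le_rfl zero_le_one hr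

theorem age (hb : b ≤ bmax) (hΔ : Δ < Δmax) (hr : r ≤ 1) :
    PossibleStep bmax Δmax (b, Δ, r) (b, Δ + 1, r) := by
  simpa [hb, Nat.succ_le_of_lt hΔ] using idle bmax Δmax b Δ r zero_le_one le_rfl hr

theorem deliver (hb : b ≤ bmax) : PossibleStep bmax Δmax (b + 1, Δ, 1) (b, 0, 1) := by
  simpa [hb] using transmit bmax Δmax b Δ zero_le_one zero_le_one le_rfl

end PossibleStep

section Reachability

variable {bmax Δmax b b' Δ Δ' r : ℕ} {s : ℕ × ℕ × ℕ}

theorem reflTransGen_charge (hb : b ≤ b') (hb' : b' ≤ bmax) (hΔ : Δ ≤ Δmax) (hr : r ≤ 1) :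
    ReflTransGen (PossibleStep bmax Δmax) (b, Δ, r) (b', Δ, r) :=
  (reflTransGen_of_succ_of_le (fun i j => PossibleStep bmax Δmax (i, Δ, r) (j, Δ, r))
    (fun _ hi => .charge (hi.2.trans_le hb') hΔ hr) hb).lift (fun i => (i, Δ, r)) fun _ _ h => h

theorem reflTransGen_age (hΔ : Δ ≤ Δ') (hΔ' : Δ' ≤ Δmax) (hb : b ≤ bmax) (hr : r ≤ 1) :
    ReflTransGen (PossibleStep bmax Δmax) (b, Δ, r) (b, Δ', r) :=
  (reflTransGen_of_succ_of_le (fun i j => PossibleStep bmax Δmax (b, i, r) (b, j, r))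
    (fun _ hi => .age hb (hi.2.trans_le hΔ') hr) hΔ).lift (fun i => (b, i, r)) fun _ _ h => h

theorem reflTransGen_drain (hb' : b' ≤ b) (hb : b ≤ bmax) :
    ReflTransGen (PossibleStep bmax Δmax) (b, 0, 1) (b', 0, 1) :=
  (reflTransGen_of_succ_of_ge (fun i j => PossibleStep bmax Δmax (i, 0, 1) (j, 0, 1))
    (fun _ hi => .deliver (hi.2.le.trans hb)) hb').lift (fun i => (i, 0, 1)) fun _ _ h => h

theorem transGen_to_zero_zero_one (hbmax : 1 ≤ bmax) (s : ℕ × ℕ × ℕ) :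
    TransGen (PossibleStep bmax Δmax) s (0, 0, 1) := by
  obtain ⟨b, Δ, r⟩ := s
  obtain ⟨k, hk⟩ : ∃ k, min (b + 1) bmax = k + 1 := Nat.exists_eq_add_one.2 (by lia)
  have hkmax : k ≤ bmax := by lia
  have charged : PossibleStep bmax Δmax (b, Δ, r) (k + 1, min Δ Δmax, 1) := by
    simpa [hk] using PossibleStep.idle bmax Δmax b Δ r le_rfl zero_le_one le_rfl
  exact .head' charged (.head (.deliver hkmax) (reflTransGen_drain k.zero_le hkmax))

theorem reflTransGen_from_zero_zero_one (hs : inStateSpace bmax Δmax s) :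
    ReflTransGen (PossibleStep bmax Δmax) (0, 0, 1) s := by
  obtain ⟨b, Δ, r⟩ := s
  obtain ⟨hb, hΔ, hr⟩ := hs
  have set_query : PossibleStep bmax Δmax (0, 0, 1) (0, 0, r) := by
    simpa using PossibleStep.idle bmax Δmax 0 0 1 zero_le_one zero_le_one hr
  exact .head set_query <| (reflTransGen_charge b.zero_le hb Δmax.zero_le hr).trans
    (reflTransGen_age Δ.zero_le hΔ hb hr)

end Reachability

theorem qvaoi_mdp_weakly_accessible
    (bmax Δmax : ℕ) (hbmax : 1 ≤ bmax) (hΔmax : 1 ≤ Δmax)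
    (β q pt ps : ℝ)
    (hβ : 0 < β ∧ β < 1) (hq : 0 < q ∧ q < 1) (hpt : 0 < pt ∧ pt < 1)
    (hps : 0 < ps ∧ ps ≤ 1)
    (s s' : ℕ × ℕ × ℕ)
    (hs : inStateSpace bmax Δmax s) (hs' : inStateSpace bmax Δmax s') :
    ∃ n : ℕ, 1 ≤ n ∧ ∃ a : ℕ → ℕ, ∃ path : ℕ → ℕ × ℕ × ℕ,
      path 0 = s ∧ path n = s' ∧
      (∀ i ≤ n, inStateSpace bmax Δmax (path i)) ∧
      (∀ i < n, a i ≤ 1 ∧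
        0 < transProb β ps pt q bmax Δmax (path i) (a i) (path (i + 1))) := by
  obtain ⟨n, hn, path, h₀, hₙ, hstep⟩ := exists_seq_of_transGen <|
    (transGen_to_zero_zero_one hbmax s).trans_left (reflTransGen_from_zero_zero_one hs')
  have hmem : ∀ i ≤ n, inStateSpace bmax Δmax (path i)
    | 0, _ => h₀ ▸ hs
    | i + 1, hi => (hstep i hi).inStateSpace_right hΔmax
  have hpos : ∀ i < n, ∃ a ≤ 1,
      0 < transProb β ps pt q bmax Δmax (path i) a (path (i + 1)) :=
    fun i hi => (hstep i hi).exists_transProb_pos hβ hps hpt hq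
  choose! a ha using hpos
  exact ⟨n, hn, a, path, h₀, hₙ, hmem, ha⟩
end

section
/- Let (V_k)_{k∈ℕ} be the value-iteration sequence of the QVAoI status-update MDP with V_0 ≡ 0. Then for every k ∈ ℕ, every battery level b with 1 ≤ b ≤ b_max, every r ∈ {0,1}, and all Δ⁻, Δ⁺ with 0 ≤ Δ⁻ ≤ Δ⁺ ≤ Δ_max, one has (1 − p_s)·[V_k(b−1, Δ⁺, r) − V_k(b−1, Δ⁻, r)] − [V_k(b, Δ⁺, r) − V_k(b, Δ⁻, r)] ≤ 0. -/
/-!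
STATEMENT 1: For the value-iteration sequence (V_k) of the QVAoI status-update MDP with
V_0 ≡ 0, for every k, every 1 ≤ b ≤ b_max, every r ∈ {0,1}, and all 0 ≤ Δ⁻ ≤ Δ⁺ ≤ Δ_max:
(1 − p_s)·[V_k(b−1,Δ⁺,r) − V_k(b−1,Δ⁻,r)] − [V_k(b,Δ⁺,r) − V_k(b,Δ⁻,r)] ≤ 0.
-/

/-- The idle-action Bellman operand `V⁰[V](b,Δ,r)`. -/
def V0op (β q pt : ℝ) (bmax Δmax : ℕ) (V : ℕ × ℕ × ℕ → ℝ) (b Δ r : ℕ) : ℝ :=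
  ∑ z ∈ Finset.range 2, ∑ e ∈ Finset.range 2, ∑ r' ∈ Finset.range 2,
    (if z = 1 then pt else 1 - pt) * (if e = 1 then β else 1 - β) *
    (if r' = 1 then q else 1 - q) *
    ((r : ℝ) * (min (Δ + z) Δmax : ℕ) + V (min (b + e) bmax, min (Δ + z) Δmax, r'))

/-- The transmit-action Bellman operand `V¹[V](b,Δ,r)` (meaningful for `b ≥ 1`). -/
def V1op (β q pt ps : ℝ) (bmax Δmax : ℕ) (V : ℕ × ℕ × ℕ → ℝ) (b Δ r : ℕ) : ℝ :=
  ∑ z ∈ Finset.range 2, ∑ e ∈ Finset.range 2, ∑ r' ∈ Finset.range 2,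
    (if z = 1 then pt else 1 - pt) * (if e = 1 then β else 1 - β) *
    (if r' = 1 then q else 1 - q) *
    ((1 - ps) * ((r : ℝ) * (min (Δ + z) Δmax : ℕ) + V (b + e - 1, min (Δ + z) Δmax, r'))
      + ps * ((r : ℝ) * (z : ℝ) + V (b + e - 1, z, r')))

/-- The value-iteration sequence: `V_0 ≡ 0` and
`V_{k+1}(s) = min (V⁰[V_k] s) (V¹[V_k] s)` when `b ≥ 1` and `r = 1`,
`V_{k+1}(s) = V⁰[V_k] s` otherwise. -/
def Vit (β q pt ps : ℝ) (bmax Δmax : ℕ) : ℕ → (ℕ × ℕ × ℕ → ℝ)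
  | 0 => fun _ => 0
  | k + 1 => fun s =>
      if 1 ≤ s.1 ∧ s.2.2 = 1 then
        min (V0op β q pt bmax Δmax (Vit β q pt ps bmax Δmax k) s.1 s.2.1 s.2.2)
            (V1op β q pt ps bmax Δmax (Vit β q pt ps bmax Δmax k) s.1 s.2.1 s.2.2)
      else
        V0op β q pt bmax Δmax (Vit β q pt ps bmax Δmax k) s.1 s.2.1 s.2.2

/-!
Fix `r` and write `c = 1 - ps`, `I b Δ = V⁰[V] (b, Δ, r)`, `T b Δ = V¹[V] (b, Δ, r)`, and `W` for
the next iterate, so that `W b = min (I b) (T b)` if transmitting is allowed and `W b = I b`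
otherwise. The claim says that `W (b + 1) - c * W b` is monotone in the age.
A transmission with `b + 1` units fails with probability `c`, and then leads to what idling with
`b` units does, whereas a success erases the age; hence `T (b + 1) = c * I b + κ b` with `κ b`
independent of `Δ`. In the decomposition
`W (b + 1) - c * W b = (W (b + 1) - c * I b) + c * (I b - W b)`
the first term is then `min (I (b + 1) - c * I b) (κ b)`, and the second is `c` times
`max 0 (I b - T b)`, where `I b - T b = I b - c * I (b - 1) - κ (b - 1)`. So everything reduces to
the monotonicity of `I (b + 1) - c * I b`, which is inherited from `V`. At a full battery both
levels are clamped to `bmax`, and there one needs that `V` itself is monotone in the age.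
-/

section EventExpect

/-- The probability of the event `(z, e, r')`: version change `z`, energy arrival `e` and next
request `r'`, all in `{0, 1}`. Any value other than `1` is read as `0`. -/
def eventProb (β q pt : ℝ) (z e r' : ℕ) : ℝ :=
  (if z = 1 then pt else 1 - pt) * (if e = 1 then β else 1 - β) * (if r' = 1 then q else 1 - q)

/-- The expectation over the random events `(z, e, r')` of one time slot, as a linear functional;
both Bellman operands are expectations of this kind. -/
def eventExpect (β q pt : ℝ) : (ℕ → ℕ → ℕ → ℝ) →ₗ[ℝ] ℝ where
  toFun f := ∑ z ∈ Finset.range 2, ∑ e ∈ Finset.range 2, ∑ r' ∈ Finset.range 2,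
    eventProb β q pt z e r' * f z e r'
  map_add' f g := by simp only [Pi.add_apply, mul_add, Finset.sum_add_distrib]
  map_smul' a f := by
    simp only [Pi.smul_apply, smul_eq_mul, mul_left_comm _ a, ← Finset.mul_sum, RingHom.id_apply]

variable {β q pt : ℝ}

lemma eventExpect_apply (f : ℕ → ℕ → ℕ → ℝ) :
    eventExpect β q pt f = ∑ z ∈ Finset.range 2, ∑ e ∈ Finset.range 2, ∑ r' ∈ Finset.range 2,
      eventProb β q pt z e r' * f z e r' :=
  rfl

lemma eventProb_nonneg (hβ : β ∈ Set.Icc 0 1) (hq : q ∈ Set.Icc 0 1) (hpt : pt ∈ Set.Icc 0 1)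
    (z e r' : ℕ) : 0 ≤ eventProb β q pt z e r' := by
  have ite_nonneg {p : ℝ} (hp : p ∈ Set.Icc 0 1) (i : ℕ) : 0 ≤ if i = 1 then p else 1 - p := by
    split_ifs
    exacts [hp.1, sub_nonneg.2 hp.2]
  exact mul_nonneg (mul_nonneg (ite_nonneg hpt z) (ite_nonneg hβ e)) (ite_nonneg hq r')

lemma monotone_eventExpect {α : Type*} [Preorder α] (hβ : β ∈ Set.Icc 0 1)
    (hq : q ∈ Set.Icc 0 1) (hpt : pt ∈ Set.Icc 0 1) {f : α → ℕ → ℕ → ℕ → ℝ}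
    (hf : ∀ z e r', Monotone fun x => f x z e r') :
    Monotone fun x => eventExpect β q pt (f x) := by
  intro x y hxy
  simp only [eventExpect_apply]
  gcongr with z _ e _ r' _
  exacts [eventProb_nonneg hβ hq hpt z e r', hf z e r' hxy]

lemma eventExpect_congr {f g : ℕ → ℕ → ℕ → ℝ} (h : ∀ z r', ∀ e ≤ 1, f z e r' = g z e r') :
    eventExpect β q pt f = eventExpect β q pt g := by
  simp only [eventExpect_apply]
  refine Finset.sum_congr rfl fun z _ => Finset.sum_congr rfl fun e he =>
    Finset.sum_congr rfl fun r' _ => ?_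
  rw [h z r' e (Finset.mem_range_succ_iff.1 he)]

end EventExpect

section Bellman

variable {β q pt ps : ℝ} {bmax Δmax : ℕ} {V : ℕ × ℕ × ℕ → ℝ} {b : ℕ}

lemma V0op_eq_eventExpect (β q pt : ℝ) (bmax Δmax : ℕ) (V : ℕ × ℕ × ℕ → ℝ) (b Δ r : ℕ) :
    V0op β q pt bmax Δmax V b Δ r = eventExpect β q pt fun z e r' =>
      (r : ℝ) * (min (Δ + z) Δmax : ℕ) + V (min (b + e) bmax, min (Δ + z) Δmax, r') :=
  rfl

lemma V1op_eq_eventExpect (β q pt ps : ℝ) (bmax Δmax : ℕ) (V : ℕ × ℕ × ℕ → ℝ) (b Δ r : ℕ) :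
    V1op β q pt ps bmax Δmax V b Δ r = eventExpect β q pt fun z e r' =>
      (1 - ps) * ((r : ℝ) * (min (Δ + z) Δmax : ℕ) + V (b + e - 1, min (Δ + z) Δmax, r'))
        + ps * ((r : ℝ) * (z : ℝ) + V (b + e - 1, z, r')) :=
  rfl

/-- The expected cost-to-go of a successful transmission with `b + 1` units of energy in the
battery: the age restarts from the version change `z` of the current slot. -/
def successValue (β q pt : ℝ) (V : ℕ × ℕ × ℕ → ℝ) (b r : ℕ) : ℝ :=
  eventExpect β q pt fun z e r' => (r : ℝ) * (z : ℝ) + V (b + e, z, r')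

lemma V1op_succ (hb : b < bmax) (Δ r : ℕ) :
    V1op β q pt ps bmax Δmax V (b + 1) Δ r =
      (1 - ps) * V0op β q pt bmax Δmax V b Δ r + ps * successValue β q pt V b r := by
  rw [V0op_eq_eventExpect, V1op_eq_eventExpect, successValue, ← smul_eq_mul, ← smul_eq_mul,
    ← map_smul, ← map_smul, ← map_add]
  refine eventExpect_congr fun z r' e he => ?_
  have level_after_transmit : b + 1 + e - 1 = b + e := by omega
  have level_unclamped : min (b + e) bmax = b + e := by omega
  simp only [level_after_transmit, level_unclamped, Pi.add_apply, Pi.smul_apply, smul_eq_mul]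

/-- The Bellman operator of the MDP, so that `Vit` is its iteration started at `0`. -/
def bellman (β q pt ps : ℝ) (bmax Δmax : ℕ) (V : ℕ × ℕ × ℕ → ℝ) (s : ℕ × ℕ × ℕ) : ℝ :=
  if 1 ≤ s.1 ∧ s.2.2 = 1 then
    min (V0op β q pt bmax Δmax V s.1 s.2.1 s.2.2) (V1op β q pt ps bmax Δmax V s.1 s.2.1 s.2.2)
  else
    V0op β q pt bmax Δmax V s.1 s.2.1 s.2.2

lemma bellman_zero_battery (Δ r : ℕ) :
    bellman β q pt ps bmax Δmax V (0, Δ, r) = V0op β q pt bmax Δmax V 0 Δ r := by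
  simp [bellman]

lemma bellman_of_ne_one {r : ℕ} (hr : r ≠ 1) (b Δ : ℕ) :
    bellman β q pt ps bmax Δmax V (b, Δ, r) = V0op β q pt bmax Δmax V b Δ r := by
  simp [bellman, hr]

lemma bellman_succ_one (b Δ : ℕ) :
    bellman β q pt ps bmax Δmax V (b + 1, Δ, 1) =
      min (V0op β q pt bmax Δmax V (b + 1) Δ 1) (V1op β q pt ps bmax Δmax V (b + 1) Δ 1) := by
  simp [bellman]

lemma monotone_truncated_cost (Δmax z r : ℕ) :
    Monotone fun Δ : ℕ => (r : ℝ) * (min (Δ + z) Δmax : ℕ) := fun Δ Δ' h => by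
  dsimp only
  gcongr

lemma monotone_truncated_age (Δmax z : ℕ) : Monotone fun Δ : ℕ => min (Δ + z) Δmax :=
  (monotone_id.add_const z).min monotone_const

/-- The invariant of value iteration: at all battery levels up to `bmax`, `V` is monotone in the
age, and `1 - ps` times an increment of `V` in the age at level `b` is at most the corresponding
increment at level `b + 1`, expressed as monotonicity of `V (b + 1, ·, r) - (1 - ps) * V (b, ·, r)`.
-/
structure HasOrderedAgeSlopes (ps : ℝ) (bmax : ℕ) (V : ℕ × ℕ × ℕ → ℝ) : Prop where
  monotone : ∀ b ≤ bmax, ∀ r, Monotone fun Δ => V (b, Δ, r)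
  monotone_succ_sub : ∀ b < bmax, ∀ r, Monotone fun Δ => V (b + 1, Δ, r) - (1 - ps) * V (b, Δ, r)

namespace HasOrderedAgeSlopes

lemma zero (ps : ℝ) (bmax : ℕ) : HasOrderedAgeSlopes ps bmax fun _ => 0 where
  monotone _ _ _ := monotone_const
  monotone_succ_sub _ _ _ := monotone_const

lemma monotone_clamped_succ_sub (hV : HasOrderedAgeSlopes ps bmax V) (hps : 0 ≤ ps) (b r : ℕ) :
    Monotone fun Δ => V (min (b + 1) bmax, Δ, r) - (1 - ps) * V (min b bmax, Δ, r) := by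
  rcases lt_or_ge b bmax with hb | hb
  · rw [min_eq_left hb.le, min_eq_left hb]
    exact hV.monotone_succ_sub b hb r
  · rw [min_eq_right hb, min_eq_right (hb.trans b.le_succ)]
    convert (hV.monotone bmax le_rfl r).const_mul hps using 2
    ring

lemma monotone_V0op (hV : HasOrderedAgeSlopes ps bmax V) (hβ : β ∈ Set.Icc 0 1)
    (hq : q ∈ Set.Icc 0 1) (hpt : pt ∈ Set.Icc 0 1) (b r : ℕ) :
    Monotone fun Δ => V0op β q pt bmax Δmax V b Δ r := by
  simp only [V0op_eq_eventExpect]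
  exact monotone_eventExpect hβ hq hpt fun z _ r' => (monotone_truncated_cost Δmax z r).add
    ((hV.monotone _ (min_le_right _ _) r').comp (monotone_truncated_age Δmax z))

lemma monotone_V0op_succ_sub (hV : HasOrderedAgeSlopes ps bmax V) (hβ : β ∈ Set.Icc 0 1)
    (hq : q ∈ Set.Icc 0 1) (hpt : pt ∈ Set.Icc 0 1) (hps : 0 ≤ ps) (b r : ℕ) :
    Monotone fun Δ =>
      V0op β q pt bmax Δmax V (b + 1) Δ r - (1 - ps) * V0op β q pt bmax Δmax V b Δ r := by
  simp only [V0op_eq_eventExpect, ← smul_eq_mul (1 - ps), ← map_smul, ← map_sub]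
  refine monotone_eventExpect hβ hq hpt fun z e r' => ?_
  have hcost := (monotone_truncated_cost Δmax z r).const_mul hps
  have hvalue := (hV.monotone_clamped_succ_sub hps (b + e) r').comp (monotone_truncated_age Δmax z)
  convert hcost.add hvalue using 2
  simp only [Pi.sub_apply, Pi.smul_apply, smul_eq_mul, Function.comp_apply, add_right_comm b 1 e]
  ring

lemma monotone_bellman_succ_sub_V0op (hV : HasOrderedAgeSlopes ps bmax V)
    (hβ : β ∈ Set.Icc 0 1) (hq : q ∈ Set.Icc 0 1) (hpt : pt ∈ Set.Icc 0 1) (hps : 0 ≤ ps)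
    (hb : b < bmax) (r : ℕ) :
    Monotone fun Δ => bellman β q pt ps bmax Δmax V (b + 1, Δ, r) -
      (1 - ps) * V0op β q pt bmax Δmax V b Δ r := by
  have hidle := hV.monotone_V0op_succ_sub (Δmax := Δmax) hβ hq hpt hps b r
  by_cases hr : r = 1
  · subst hr
    simp only [bellman_succ_one, V1op_succ hb, ← min_sub_sub_right, add_sub_cancel_left]
    exact hidle.min monotone_const
  · simpa only [bellman_of_ne_one hr] using hidle

lemma monotone_V0op_sub_bellman (hV : HasOrderedAgeSlopes ps bmax V)
    (hβ : β ∈ Set.Icc 0 1) (hq : q ∈ Set.Icc 0 1) (hpt : pt ∈ Set.Icc 0 1) (hps : 0 ≤ ps)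
    (hb : b ≤ bmax) (r : ℕ) :
    Monotone fun Δ => V0op β q pt bmax Δmax V b Δ r -
      bellman β q pt ps bmax Δmax V (b, Δ, r) := by
  by_cases hr : r = 1
  · subst hr
    cases b with
    | zero => simpa only [bellman_zero_battery, sub_self] using monotone_const
    | succ b =>
      simp only [bellman_succ_one, V1op_succ hb, ← max_sub_sub_left, sub_self, ← sub_sub]
      have hgain := (hV.monotone_V0op_succ_sub (Δmax := Δmax) hβ hq hpt hps b 1).add_const
        (-(ps * successValue β q pt V b 1))
      exact monotone_const.max (by simpa only [← sub_eq_add_neg] using hgain)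
  · simpa only [bellman_of_ne_one hr, sub_self] using monotone_const

protected lemma bellman (hV : HasOrderedAgeSlopes ps bmax V) (hβ : β ∈ Set.Icc 0 1)
    (hq : q ∈ Set.Icc 0 1) (hpt : pt ∈ Set.Icc 0 1) (hps : ps ∈ Set.Icc 0 1) :
    HasOrderedAgeSlopes ps bmax (bellman β q pt ps bmax Δmax V) where
  monotone b hb r := by
    cases b with
    | zero => simpa only [bellman_zero_battery] using hV.monotone_V0op hβ hq hpt 0 r
    | succ b =>
      simpa only [sub_add_cancel] using
        (hV.monotone_bellman_succ_sub_V0op (Δmax := Δmax) hβ hq hpt hps.1 hb r).add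
          ((hV.monotone_V0op (Δmax := Δmax) hβ hq hpt b r).const_mul (sub_nonneg.2 hps.2))
  monotone_succ_sub b hb r := by
    convert (hV.monotone_bellman_succ_sub_V0op (Δmax := Δmax) hβ hq hpt hps.1 hb r).add
      ((hV.monotone_V0op_sub_bellman hβ hq hpt hps.1 hb.le r).const_mul (sub_nonneg.2 hps.2))
      using 2
    ring

end HasOrderedAgeSlopes

lemma hasOrderedAgeSlopes_Vit (hβ : β ∈ Set.Icc 0 1) (hq : q ∈ Set.Icc 0 1)
    (hpt : pt ∈ Set.Icc 0 1) (hps : ps ∈ Set.Icc 0 1) (bmax Δmax k : ℕ) :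
    HasOrderedAgeSlopes ps bmax (Vit β q pt ps bmax Δmax k) := by
  induction k with
  | zero => exact .zero ps bmax
  | succ k ih => exact ih.bellman hβ hq hpt hps

end Bellman

theorem valueIteration_key_inequality
    (bmax Δmax : ℕ) (hbmax : 1 ≤ bmax) (hΔmax : 1 ≤ Δmax)
    (β q pt ps : ℝ)
    (hβ : 0 ≤ β ∧ β ≤ 1) (hq : 0 ≤ q ∧ q ≤ 1)
    (hpt : 0 ≤ pt ∧ pt ≤ 1) (hps : 0 ≤ ps ∧ ps ≤ 1) :
    ∀ (k b r Δm Δp : ℕ), 1 ≤ b → b ≤ bmax → r ≤ 1 → Δm ≤ Δp → Δp ≤ Δmax →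
      (1 - ps) * (Vit β q pt ps bmax Δmax k (b - 1, Δp, r)
                    - Vit β q pt ps bmax Δmax k (b - 1, Δm, r))
        - (Vit β q pt ps bmax Δmax k (b, Δp, r)
            - Vit β q pt ps bmax Δmax k (b, Δm, r)) ≤ 0 := by
  intro k b r Δm Δp hb hbmax' _ hm _
  obtain ⟨b, rfl⟩ := Nat.exists_eq_add_of_le' hb
  have key := (hasOrderedAgeSlopes_Vit hβ hq hpt hps bmax Δmax k).monotone_succ_sub b hbmax' r hm
  rw [Nat.add_sub_cancel]
  linarith
end

section
/- Let μ be a stationary distribution of the single-battery QVAoI Markov chain with threshold Δ_T = 0 (the greedy policy). Then μ(0,0) = (p̄_t · β · β̄) / (β + p_t · β̄). -/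
/-- A stationary distribution of the single-battery QVAoI Markov chain with threshold
`Δ_T = 0` (the greedy policy), given as the pair of functions `μ0 Δ = μ(0,Δ)` and
`μ1 Δ = μ(1,Δ)`. Here `γ00 = (1−p_t)(1−β)`, `γ01 = (1−p_t)β`, `γ10 = p_t(1−β)`,
`γ11 = p_t β`, and `S = Σ_{δ=0}^∞ μ(1,δ)`. -/
structure IsStationaryT0 (pt β : ℝ) (μ0 μ1 : ℕ → ℝ) : Prop where
  nonneg0 : ∀ Δ, 0 ≤ μ0 Δ
  nonneg1 : ∀ Δ, 0 ≤ μ1 Δ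
  summable0 : Summable μ0
  summable1 : Summable μ1
  total : (∑' Δ, μ0 Δ) + (∑' Δ, μ1 Δ) = 1
  bal00 : μ0 0 = (1 - pt) * (1 - β) * μ0 0 + (1 - pt) * (1 - β) * (∑' δ, μ1 δ)
  bal01 : μ0 1 = pt * (1 - β) * μ0 0 + (1 - pt) * (1 - β) * μ0 1
      + pt * (1 - β) * (∑' δ, μ1 δ)
  bal0  : ∀ Δ, 2 ≤ Δ → μ0 Δ = (1 - pt) * (1 - β) * μ0 Δ + pt * (1 - β) * μ0 (Δ - 1)
  bal10 : μ1 0 = (1 - pt) * β * μ0 0 + (1 - pt) * β * (∑' δ, μ1 δ)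
  bal11 : μ1 1 = pt * β * μ0 0 + (1 - pt) * β * μ0 1 + pt * β * (∑' δ, μ1 δ)
  bal1  : ∀ Δ, 2 ≤ Δ → μ1 Δ = pt * β * μ0 (Δ - 1) + (1 - pt) * β * μ0 Δ

/-!
Summing the balance equations of the states `(0, Δ)` over `Δ` forgets the age: the battery is empty
with probability `1 - β` after every step, whatever the current state. Hence `S = β`, and the
balance equation at `(0, 0)` becomes linear in `μ(0, 0)`, with coefficient
`1 - γ00 = β + p_t (1 - β)`.
-/

theorem tsum_succ_eq_of_recurrence {R : Type*} [Ring R] [TopologicalSpace R] [IsTopologicalRing R]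
    [T2Space R] {f : ℕ → R} {a b : R} (hf : Summable f)
    (hrec : ∀ n, f (n + 1) = a * f (n + 1) + b * f n) :
    ∑' n, f (n + 1) = a * ∑' n, f (n + 1) + b * ∑' n, f n := by
  have hf_succ : Summable fun n ↦ f (n + 1) := (summable_nat_add_iff 1).2 hf
  calc
    ∑' n, f (n + 1) = ∑' n, (a * f (n + 1) + b * f n) := tsum_congr hrec
    _ = a * ∑' n, f (n + 1) + b * ∑' n, f n := by
      rw [(hf_succ.mul_left a).tsum_add (hf.mul_left b), hf_succ.tsum_mul_left, hf.tsum_mul_left]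

namespace IsStationaryT0

variable {pt β : ℝ} {μ0 μ1 : ℕ → ℝ}

theorem tsum_empty_eq (hμ : IsStationaryT0 pt β μ0 μ1) : ∑' Δ, μ0 Δ = 1 - β := by
  have hsucc : Summable fun Δ ↦ μ0 (Δ + 1) := (summable_nat_add_iff 1).2 hμ.summable0
  have htail : ∑' Δ, μ0 (Δ + 2) =
      (1 - pt) * (1 - β) * ∑' Δ, μ0 (Δ + 2) + pt * (1 - β) * ∑' Δ, μ0 (Δ + 1) :=
    tsum_succ_eq_of_recurrence hsucc fun Δ ↦ hμ.bal0 (Δ + 2) (Nat.le_add_left 2 Δ)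
  have hsplit0 : ∑' Δ, μ0 Δ = μ0 0 + ∑' Δ, μ0 (Δ + 1) := hμ.summable0.tsum_eq_zero_add
  have hsplit1 : ∑' Δ, μ0 (Δ + 1) = μ0 1 + ∑' Δ, μ0 (Δ + 2) := hsucc.tsum_eq_zero_add
  calc
    ∑' Δ, μ0 Δ = (1 - β) * (∑' Δ, μ0 Δ + ∑' Δ, μ1 Δ) := by
      linear_combination hμ.bal00 + hμ.bal01 + htail + β * hsplit0
        + (1 - (1 - pt) * (1 - β)) * hsplit1
    _ = 1 - β := by rw [hμ.total, mul_one]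

theorem tsum_charged_eq (hμ : IsStationaryT0 pt β μ0 μ1) : ∑' Δ, μ1 Δ = β := by
  linear_combination hμ.total - hμ.tsum_empty_eq

theorem mul_empty_zero_eq (hμ : IsStationaryT0 pt β μ0 μ1) :
    (β + pt * (1 - β)) * μ0 0 = (1 - pt) * β * (1 - β) := by
  have hbal := hμ.bal00
  rw [hμ.tsum_charged_eq] at hbal
  linear_combination hbal

end IsStationaryT0

/-- `μ(0,0) = p̄_t·β·β̄ / (β + p_t·β̄)` for the greedy (threshold 0) chain. -/
theorem stationary_T0_mu00
    (pt β : ℝ) (hpt : 0 < pt ∧ pt < 1) (hβ : 0 < β ∧ β < 1)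
    (μ0 μ1 : ℕ → ℝ) (hμ : IsStationaryT0 pt β μ0 μ1) :
    μ0 0 = ((1 - pt) * β * (1 - β)) / (β + pt * (1 - β)) := by
  have hden : 0 < β + pt * (1 - β) := add_pos hβ.1 (mul_pos hpt.1 (sub_pos.2 hβ.2))
  rw [eq_div_iff hden.ne', mul_comm]
  exact hμ.mul_empty_zero_eq
end

section
/- Let μ be a stationary distribution of the single-battery QVAoI Markov chain with threshold Δ_T = 0 (the greedy policy), and assume additionally that the weighted series Σ_{Δ=0}^{∞} Δ·μ(0,Δ) and Σ_{Δ=0}^{∞} Δ·μ(1,Δ) converge. Then the average QVAoI equals Σ_{b∈{0,1}} Σ_{Δ=0}^{∞} Δ·μ(b,Δ) = p_t / β. -/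
/-!
A charged battery is spent at once and resets the age to `0`; then the age grows by one with
probability `p_t` and, independently, the battery is recharged with probability `β`. So in
stationarity the battery is independent of the age, and if `A` is the mean age, the mean age after
the reset is `(1 - β) A`. One more step gives `A = (1 - β) A + p_t`, that is, `A = p_t / β`.
-/

section AddBernoulli

variable {R : Type*} [CommRing R]

/-- The law of `X + B`, where `X` has law `ρ` and `B` is an independent Bernoulli variable of
parameter `p`: the law of the age after an increment with probability `p`. The weight `ρ` need not
be normalized. -/
def addBernoulli (p : R) (ρ : ℕ → R) : ℕ → R
  | 0 => (1 - p) * ρ 0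
  | n + 1 => (1 - p) * ρ (n + 1) + p * ρ n

theorem hasSum_natCast_mul_addBernoulli [TopologicalSpace R] [IsTopologicalRing R]
    {ρ : ℕ → R} {m s : R} (p : R) (hm : HasSum (fun n : ℕ => (n : R) * ρ n) m) (hs : HasSum ρ s) :
    HasSum (fun n : ℕ => (n : R) * addBernoulli p ρ n) (m + p * s) := by
  have weighted_tail : HasSum (fun n : ℕ => ((n + 1 : ℕ) : R) * ρ (n + 1)) m := by
    simpa using (hasSum_nat_add_iff' 1).2 hm
  have weighted_succ (n : ℕ) : ((n + 1 : ℕ) : R) * addBernoulli p ρ (n + 1) =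
      (1 - p) * (((n + 1 : ℕ) : R) * ρ (n + 1)) + p * (n * ρ n + ρ n) := by
    rw [addBernoulli]
    push_cast
    ring
  rw [← hasSum_nat_add_iff' 1, Finset.sum_range_one, Nat.cast_zero, zero_mul, sub_zero,
    show m + p * s = (1 - p) * m + p * (m + s) by ring]
  simpa only [weighted_succ] using
    (weighted_tail.mul_left (1 - p)).add ((hm.add hs).mul_left p)

end AddBernoulli

/-- The law of the age just after the transmission decision of the greedy policy: a charged battery,
whatever the age, sends an update and moves its mass to age `0`, while an empty battery leaves the
age unchanged. -/
noncomputable def resetAge (μ0 μ1 : ℕ → ℝ) : ℕ → ℝ :=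
  μ0 + Pi.single 0 (∑' δ, μ1 δ)

theorem resetAge_zero (μ0 μ1 : ℕ → ℝ) : resetAge μ0 μ1 0 = μ0 0 + ∑' δ, μ1 δ := by
  simp [resetAge]

theorem resetAge_succ (μ0 μ1 : ℕ → ℝ) (n : ℕ) : resetAge μ0 μ1 (n + 1) = μ0 (n + 1) := by
  simp [resetAge]

theorem natCast_mul_resetAge (μ0 μ1 : ℕ → ℝ) (n : ℕ) :
    (n : ℝ) * resetAge μ0 μ1 n = n * μ0 n := by
  cases n with
  | zero => simp
  | succ n => rw [resetAge_succ]

namespace IsStationaryT0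

variable {pt β : ℝ} {μ0 μ1 : ℕ → ℝ}

theorem hasSum_resetAge (hμ : IsStationaryT0 pt β μ0 μ1) : HasSum (resetAge μ0 μ1) 1 :=
  hμ.total ▸ hμ.summable0.hasSum.add (hasSum_pi_single 0 (∑' δ, μ1 δ))

theorem empty_eq_mul_addBernoulli (hμ : IsStationaryT0 pt β μ0 μ1) (n : ℕ) :
    μ0 n = (1 - β) * addBernoulli pt (resetAge μ0 μ1) n := by
  match n with
  | 0 =>
    rw [addBernoulli, resetAge_zero]
    linear_combination hμ.bal00
  | 1 =>
    rw [addBernoulli, resetAge_succ, resetAge_zero]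
    linear_combination hμ.bal01
  | k + 2 =>
    have hbal := hμ.bal0 (k + 2) (Nat.le_add_left 2 k)
    rw [Nat.add_succ_sub_one] at hbal
    rw [addBernoulli, resetAge_succ, resetAge_succ]
    linear_combination hbal

theorem charged_eq_mul_addBernoulli (hμ : IsStationaryT0 pt β μ0 μ1) (n : ℕ) :
    μ1 n = β * addBernoulli pt (resetAge μ0 μ1) n := by
  match n with
  | 0 =>
    rw [addBernoulli, resetAge_zero]
    linear_combination hμ.bal10
  | 1 =>
    rw [addBernoulli, resetAge_succ, resetAge_zero]
    linear_combination hμ.bal11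
  | k + 2 =>
    have hbal := hμ.bal1 (k + 2) (Nat.le_add_left 2 k)
    rw [Nat.add_succ_sub_one] at hbal
    rw [addBernoulli, resetAge_succ, resetAge_succ]
    linear_combination hbal

theorem hasSum_natCast_mul_addBernoulli_resetAge (hμ : IsStationaryT0 pt β μ0 μ1)
    (hw0 : Summable fun n : ℕ => (n : ℝ) * μ0 n) :
    HasSum (fun n : ℕ => (n : ℝ) * addBernoulli pt (resetAge μ0 μ1) n)
      ((∑' n : ℕ, (n : ℝ) * μ0 n) + pt) := by
  have hreset : HasSum (fun n : ℕ => (n : ℝ) * resetAge μ0 μ1 n) (∑' n : ℕ, (n : ℝ) * μ0 n) := by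
    simpa only [natCast_mul_resetAge] using hw0.hasSum
  simpa only [mul_one] using hasSum_natCast_mul_addBernoulli pt hreset hμ.hasSum_resetAge

theorem tsum_natCast_mul_empty (hμ : IsStationaryT0 pt β μ0 μ1)
    (hw0 : Summable fun n : ℕ => (n : ℝ) * μ0 n) :
    ∑' n : ℕ, (n : ℝ) * μ0 n = (1 - β) * ((∑' n : ℕ, (n : ℝ) * μ0 n) + pt) := by
  calc ∑' n : ℕ, (n : ℝ) * μ0 n
      = ∑' n : ℕ, (1 - β) * ((n : ℝ) * addBernoulli pt (resetAge μ0 μ1) n) :=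
        tsum_congr fun n => by rw [hμ.empty_eq_mul_addBernoulli n, mul_left_comm]
    _ = (1 - β) * ((∑' n : ℕ, (n : ℝ) * μ0 n) + pt) :=
        ((hμ.hasSum_natCast_mul_addBernoulli_resetAge hw0).mul_left (1 - β)).tsum_eq

theorem tsum_natCast_mul_charged (hμ : IsStationaryT0 pt β μ0 μ1)
    (hw0 : Summable fun n : ℕ => (n : ℝ) * μ0 n) :
    ∑' n : ℕ, (n : ℝ) * μ1 n = β * ((∑' n : ℕ, (n : ℝ) * μ0 n) + pt) := by
  calc ∑' n : ℕ, (n : ℝ) * μ1 n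
      = ∑' n : ℕ, β * ((n : ℝ) * addBernoulli pt (resetAge μ0 μ1) n) :=
        tsum_congr fun n => by rw [hμ.charged_eq_mul_addBernoulli n, mul_left_comm]
    _ = β * ((∑' n : ℕ, (n : ℝ) * μ0 n) + pt) :=
        ((hμ.hasSum_natCast_mul_addBernoulli_resetAge hw0).mul_left β).tsum_eq

end IsStationaryT0

/-- the average QVAoI of the greedy (threshold 0) chain equals `p_t/β`. -/
theorem stationary_T0_average_QVAoI
    (pt β : ℝ) (hpt : 0 < pt ∧ pt < 1) (hβ : 0 < β ∧ β < 1)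
    (μ0 μ1 : ℕ → ℝ) (hμ : IsStationaryT0 pt β μ0 μ1)
    (hw0 : Summable (fun Δ : ℕ => (Δ : ℝ) * μ0 Δ))
    (hw1 : Summable (fun Δ : ℕ => (Δ : ℝ) * μ1 Δ)) :
    (∑' Δ : ℕ, (Δ : ℝ) * μ0 Δ) + (∑' Δ : ℕ, (Δ : ℝ) * μ1 Δ) = pt / β := by
  have hempty := hμ.tsum_natCast_mul_empty hw0
  have hcharged := hμ.tsum_natCast_mul_charged hw0
  calc (∑' Δ : ℕ, (Δ : ℝ) * μ0 Δ) + (∑' Δ : ℕ, (Δ : ℝ) * μ1 Δ)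
      = (∑' Δ : ℕ, (Δ : ℝ) * μ0 Δ) + pt := by linear_combination hempty + hcharged
    _ = pt / β := by
      rw [eq_div_iff hβ.1.ne']
      linear_combination hempty
end

section
/- Let μ be a stationary distribution of the single-battery QVAoI Markov chain with threshold Δ_T = 0 (the greedy policy). Then the empty-battery stationary probabilities decay geometrically: for every Δ ≥ 1, μ(0,Δ) = ( (p_t·β̄)/(β + p_t·β̄) )^{Δ−1} · μ(0,1). -/
theorem eq_pow_sub_mul_of_succ_eq_mul {M : Type*} [Monoid M] {u : ℕ → M} {r : M} {m n : ℕ}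
    (hu : ∀ k, m ≤ k → u (k + 1) = r * u k) (hmn : m ≤ n) : u n = r ^ (n - m) * u m := by
  induction n, hmn using Nat.le_induction with
  | base => simp
  | succ k hk ih => rw [hu k hk, ih, Nat.succ_sub hk, pow_succ', mul_assoc]

theorem eq_div_one_sub_mul_of_eq_mul_add_mul {K : Type*} [Field K] {a b x y : K} (ha : a ≠ 1)
    (hx : x = a * x + b * y) : x = b / (1 - a) * y := by
  rw [div_mul_eq_mul_div, eq_div_iff (sub_ne_zero.mpr ha.symm)]
  linear_combination hx

theorem stationary_T0_geometric_decay_general {K : Type*} [Field K] {p β : K} {μ : ℕ → K}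
    (hden : β + p * (1 - β) ≠ 0)
    (hbal : ∀ Δ, 2 ≤ Δ → μ Δ = (1 - p) * (1 - β) * μ Δ + p * (1 - β) * μ (Δ - 1))
    {Δ : ℕ} (hΔ : 1 ≤ Δ) :
    μ Δ = (p * (1 - β) / (β + p * (1 - β))) ^ (Δ - 1) * μ 1 := by
  have one_sub_stay : 1 - (1 - p) * (1 - β) = β + p * (1 - β) := by ring
  have stay_ne_one : (1 - p) * (1 - β) ≠ 1 := (sub_ne_zero.mp (one_sub_stay ▸ hden)).symm
  have succ_eq (k : ℕ) (hk : 1 ≤ k) : μ (k + 1) = p * (1 - β) / (β + p * (1 - β)) * μ k :=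
    one_sub_stay ▸ eq_div_one_sub_mul_of_eq_mul_add_mul stay_ne_one
      (hbal (k + 1) (Nat.succ_le_succ hk))
  exact eq_pow_sub_mul_of_succ_eq_mul succ_eq hΔ

/-- geometric decay of the empty-battery stationary probabilities:
for every `Δ ≥ 1`, `μ(0,Δ) = ((p_t·β̄)/(β + p_t·β̄))^(Δ−1) · μ(0,1)`. -/
theorem stationary_T0_geometric_decay
    (pt β : ℝ) (hpt : 0 < pt ∧ pt < 1) (hβ : 0 < β ∧ β < 1)
    (μ0 μ1 : ℕ → ℝ) (hμ : IsStationaryT0 pt β μ0 μ1) :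
    ∀ Δ : ℕ, 1 ≤ Δ →
      μ0 Δ = ((pt * (1 - β)) / (β + pt * (1 - β))) ^ (Δ - 1) * μ0 1 := by
  have hden : 0 < β + pt * (1 - β) := add_pos hβ.1 (mul_pos hpt.1 (sub_pos.mpr hβ.2))
  exact fun _ hΔ ↦ stationary_T0_geometric_decay_general hden.ne' hμ.bal0 hΔ
end

section
/- Let μ be a stationary distribution of the single-battery QVAoI Markov chain with threshold Δ_T = 1. Then μ(0,0) = (p_t · p̄_t · β · β̄) / (β² + p_t·β̄·(p_t + β)). -/
/-- A stationary distribution of the single-battery QVAoI Markov chain with threshold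
`Δ_T = 1`, given as the pair of functions `μ0 Δ = μ(0,Δ)` and `μ1 Δ = μ(1,Δ)`.
Here `γ00 = (1−p_t)(1−β)`, `γ01 = (1−p_t)β`, `γ10 = p_t(1−β)`, `γ11 = p_t β`, and
`S = Σ_{δ=1}^∞ μ(1,δ)`, written below as `∑' δ, μ1 (δ + 1)`. -/
structure IsStationaryT1 (pt β : ℝ) (μ0 μ1 : ℕ → ℝ) : Prop where
  nonneg0 : ∀ Δ, 0 ≤ μ0 Δ
  nonneg1 : ∀ Δ, 0 ≤ μ1 Δ
  summable0 : Summable μ0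
  summable1 : Summable μ1
  total : (∑' Δ, μ0 Δ) + (∑' Δ, μ1 Δ) = 1
  bal00 : μ0 0 = (1 - pt) * (1 - β) * μ0 0
      + (1 - pt) * (1 - β) * (∑' δ, μ1 (δ + 1))
  bal01 : μ0 1 = pt * (1 - β) * μ0 0 + (1 - pt) * (1 - β) * μ0 1
      + pt * (1 - β) * (∑' δ, μ1 (δ + 1))
  bal0  : ∀ Δ, 2 ≤ Δ → μ0 Δ = (1 - pt) * (1 - β) * μ0 Δ + pt * (1 - β) * μ0 (Δ - 1)
  bal10 : μ1 0 = (1 - pt) * β * μ0 0 + (1 - pt) * μ1 0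
      + (1 - pt) * β * (∑' δ, μ1 (δ + 1))
  bal11 : μ1 1 = pt * β * μ0 0 + (1 - pt) * β * μ0 1 + pt * μ1 0
      + pt * β * (∑' δ, μ1 (δ + 1))
  bal1  : ∀ Δ, 2 ≤ Δ → μ1 Δ = pt * β * μ0 (Δ - 1) + (1 - pt) * β * μ0 Δ

/-!
The states `(0, 0)` and `(1, Δ)` with `Δ ≥ 1` all have the same outgoing transitions. Let `R` be
their total mass. The balance equations express `μ(0,0)` and `μ(1,0)` through `R`, and, summed over
`Δ ≥ 1`, they do the same for the mass of the states `(0, Δ)` with `Δ ≥ 1`. Since these masses add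
up to one, normalization determines `R`, and hence `μ(0,0)`.
-/

theorem sub_mul_tsum_of_mul_succ_eq_mul {α : Type*} [Ring α] [TopologicalSpace α]
    [IsTopologicalRing α] [T2Space α] {a b : α} {f : ℕ → α} (hf : Summable f)
    (hrec : ∀ n, a * f (n + 1) = b * f n) :
    (a - b) * ∑' n, f n = a * f 0 := by
  have hf' : Summable fun n ↦ f (n + 1) := (summable_nat_add_iff 1).2 hf
  have htail : a * ∑' n, f (n + 1) = b * ∑' n, f n := by
    rw [← hf'.tsum_mul_left, ← hf.tsum_mul_left]
    exact tsum_congr hrec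
  calc (a - b) * ∑' n, f n
      = a * (f 0 + ∑' n, f (n + 1)) - b * ∑' n, f n := by rw [sub_mul, ← hf.tsum_eq_zero_add]
    _ = a * f 0 := by rw [mul_add, htail, add_sub_cancel_right]

/-- The mass of the reset states `(0, 0)` and `(1, Δ)`, `Δ ≥ 1`, from each of which the chain moves
to `(0, 0)`, `(0, 1)`, `(1, 0)`, `(1, 1)` with probabilities `γ00`, `γ10`, `γ01`, `γ11`. -/
noncomputable def resetMass (μ0 μ1 : ℕ → ℝ) : ℝ :=
  μ0 0 + ∑' δ, μ1 (δ + 1)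

namespace IsStationaryT1

variable {pt β : ℝ} {μ0 μ1 : ℕ → ℝ}

theorem mu0_zero_eq_mul_resetMass (hμ : IsStationaryT1 pt β μ0 μ1) :
    μ0 0 = (1 - pt) * (1 - β) * resetMass μ0 μ1 := by
  rw [resetMass, mul_add]
  exact hμ.bal00

theorem mul_mu1_zero_eq_mul_resetMass (hμ : IsStationaryT1 pt β μ0 μ1) :
    pt * μ1 0 = (1 - pt) * β * resetMass μ0 μ1 := by
  rw [resetMass]
  linear_combination hμ.bal10

theorem mul_tsum_mu0_succ_eq_mul_resetMass (hμ : IsStationaryT1 pt β μ0 μ1) :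
    β * ∑' Δ, μ0 (Δ + 1) = pt * (1 - β) * resetMass μ0 μ1 := by
  have hsummable : Summable fun Δ ↦ μ0 (Δ + 1) := (summable_nat_add_iff 1).2 hμ.summable0
  have hrec (Δ : ℕ) :
      (1 - (1 - pt) * (1 - β)) * μ0 (Δ + 1 + 1) = pt * (1 - β) * μ0 (Δ + 1) := by
    have hbal : μ0 (Δ + 1 + 1) =
        (1 - pt) * (1 - β) * μ0 (Δ + 1 + 1) + pt * (1 - β) * μ0 (Δ + 1) :=
      hμ.bal0 (Δ + 2) (by lia)
    linear_combination hbal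
  calc β * ∑' Δ, μ0 (Δ + 1)
      = (1 - (1 - pt) * (1 - β) - pt * (1 - β)) * ∑' Δ, μ0 (Δ + 1) := by ring
    _ = (1 - (1 - pt) * (1 - β)) * μ0 1 := sub_mul_tsum_of_mul_succ_eq_mul hsummable hrec
    _ = pt * (1 - β) * resetMass μ0 μ1 := by
      rw [resetMass]
      linear_combination hμ.bal01

theorem resetMass_add_tsum_add_eq_one (hμ : IsStationaryT1 pt β μ0 μ1) :
    resetMass μ0 μ1 + ∑' Δ, μ0 (Δ + 1) + μ1 0 = 1 := by
  rw [resetMass]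
  linear_combination
    hμ.total - hμ.summable0.tsum_eq_zero_add - hμ.summable1.tsum_eq_zero_add

theorem resetMass_mul_eq (hμ : IsStationaryT1 pt β μ0 μ1) :
    resetMass μ0 μ1 * (β ^ 2 + pt * (1 - β) * (pt + β)) = pt * β := by
  linear_combination pt * β * hμ.resetMass_add_tsum_add_eq_one
    - pt * hμ.mul_tsum_mu0_succ_eq_mul_resetMass - β * hμ.mul_mu1_zero_eq_mul_resetMass

end IsStationaryT1

theorem stationary_T1_mu00_general {pt β : ℝ} {μ0 μ1 : ℕ → ℝ} (hμ : IsStationaryT1 pt β μ0 μ1) :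
    μ0 0 * (β ^ 2 + pt * (1 - β) * (pt + β)) = pt * (1 - pt) * β * (1 - β) := by
  rw [hμ.mu0_zero_eq_mul_resetMass, mul_assoc, hμ.resetMass_mul_eq]
  ring

/-- `μ(0,0) = p_t·p̄_t·β·β̄ / (β² + p_t·β̄·(p_t + β))` for the
threshold-1 chain. -/
theorem stationary_T1_mu00
    (pt β : ℝ) (hpt : 0 < pt ∧ pt < 1) (hβ : 0 < β ∧ β < 1)
    (μ0 μ1 : ℕ → ℝ) (hμ : IsStationaryT1 pt β μ0 μ1) :
    μ0 0 = (pt * (1 - pt) * β * (1 - β)) / (β ^ 2 + pt * (1 - β) * (pt + β)) := by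
  have hden : 0 < β ^ 2 + pt * (1 - β) * (pt + β) := by
    have hpt_pos := hpt.1
    have hβ_pos := hβ.1
    have hβ_compl_pos := sub_pos.2 hβ.2
    positivity
  exact eq_div_of_mul_eq hden.ne' (stationary_T1_mu00_general hμ)
end

section
/- Fix an integer Δ_T ≥ 2 and let μ be a stationary distribution of the single-battery QVAoI Markov chain with threshold Δ_T. Then μ(0,0) = (p_t · p̄_t · β · β̄) / ( (β + p_t·β̄) · [ β·Δ_T + p_t · ( (p_t·β̄)/(β + p_t·β̄) )^{Δ_T} ] ). -/
/-- A stationary distribution of the single-battery QVAoI Markov chain with threshold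
`ΔT ≥ 2`, given as the pair of functions `μ0 Δ = μ(0,Δ)` and `μ1 Δ = μ(1,Δ)`.
Here `γ00 = (1−p_t)(1−β)`, `γ01 = (1−p_t)β`, `γ10 = p_t(1−β)`, `γ11 = p_t β`, and
`S = Σ_{δ=ΔT}^∞ μ(1,δ)`, written below as `∑' δ, μ1 (δ + ΔT)`. -/
structure IsStationaryT (pt β : ℝ) (ΔT : ℕ) (μ0 μ1 : ℕ → ℝ) : Prop where
  nonneg0 : ∀ Δ, 0 ≤ μ0 Δ
  nonneg1 : ∀ Δ, 0 ≤ μ1 Δ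
  summable0 : Summable μ0
  summable1 : Summable μ1
  total : (∑' Δ, μ0 Δ) + (∑' Δ, μ1 Δ) = 1
  bal00 : μ0 0 = (1 - pt) * (1 - β) * μ0 0
      + (1 - pt) * (1 - β) * (∑' δ, μ1 (δ + ΔT))
  bal01 : μ0 1 = pt * (1 - β) * μ0 0 + (1 - pt) * (1 - β) * μ0 1
      + pt * (1 - β) * (∑' δ, μ1 (δ + ΔT))
  bal0  : ∀ Δ, 2 ≤ Δ → μ0 Δ = (1 - pt) * (1 - β) * μ0 Δ + pt * (1 - β) * μ0 (Δ - 1)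
  bal10 : μ1 0 = (1 - pt) * β * μ0 0 + (1 - pt) * μ1 0
      + (1 - pt) * β * (∑' δ, μ1 (δ + ΔT))
  bal11 : μ1 1 = pt * β * μ0 0 + (1 - pt) * β * μ0 1 + pt * μ1 0 + (1 - pt) * μ1 1
      + pt * β * (∑' δ, μ1 (δ + ΔT))
  bal1mid : ∀ Δ, 2 ≤ Δ → Δ < ΔT →
      μ1 Δ = pt * β * μ0 (Δ - 1) + (1 - pt) * β * μ0 Δ
        + pt * μ1 (Δ - 1) + (1 - pt) * μ1 Δ
  bal1T : μ1 ΔT = pt * β * μ0 (ΔT - 1) + (1 - pt) * β * μ0 ΔT + pt * μ1 (ΔT - 1)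
  bal1high : ∀ Δ, ΔT + 1 ≤ Δ →
      μ1 Δ = pt * β * μ0 (Δ - 1) + (1 - pt) * β * μ0 Δ

/-!
Let `S` be the stationary rate of transmission, i.e. the mass of the states `(1, Δ)` with `Δ ≥ ΔT`.
Forgetting the battery, the age can only stay put, grow by one at a query, or be reset by a
transmission, so balance makes the age marginal uniform below the threshold: every age
`1 ≤ n < ΔT` has mass `S / pt`. With an empty battery no reset is possible, so the masses of
the states `(0, n)` with `1 ≤ n` decay geometrically, with ratio `r = γ10 / (1 - γ00)`. The two
facts express the total mass as `ΔT * S / pt + S * r ^ ΔT / β`, which determines `S`; balance at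
`(0, 0)` then gives `μ(0, 0)`.
-/

/-- The ratio of the stationary masses of `(0, n + 1)` and `(0, n)` for `1 ≤ n`: the conditional
probability `γ10 / (1 - γ00)` that `(0, n)` is left for `(0, n + 1)`, given that it is left. -/
noncomputable def emptyAgeRatio (pt β : ℝ) : ℝ :=
  pt * (1 - β) / (β + pt * (1 - β))

/-- The mass `S = Σ_{δ ≥ ΔT} μ(1, δ)` of the states in which a transmission takes place. -/
noncomputable def transmissionRate (ΔT : ℕ) (μ1 : ℕ → ℝ) : ℝ :=
  ∑' δ, μ1 (δ + ΔT)

/-- The age marginal `μ(0, n) + μ(1, n)` of a distribution on the states `(b, n)`. -/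
def ageMass (μ0 μ1 : ℕ → ℝ) (n : ℕ) : ℝ :=
  μ0 n + μ1 n

theorem tsum_const_mul_geometric_nat_add {r : ℝ} (hr₀ : 0 ≤ r) (hr₁ : r < 1) (c : ℝ) (k : ℕ) :
    ∑' n : ℕ, c * r ^ (n + k) = c * r ^ k / (1 - r) := by
  simp only [pow_add, tsum_mul_left, tsum_mul_right, tsum_geometric_of_lt_one hr₀ hr₁]
  ring

section EmptyAgeRatio

variable {pt β : ℝ}

theorem add_mul_one_sub_pos (hpt : 0 ≤ pt) (hβ₀ : 0 < β) (hβ₁ : β ≤ 1) : 0 < β + pt * (1 - β) :=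
  add_pos_of_pos_of_nonneg hβ₀ (mul_nonneg hpt (sub_nonneg.2 hβ₁))

theorem emptyAgeRatio_nonneg (hpt : 0 ≤ pt) (hβ₀ : 0 < β) (hβ₁ : β ≤ 1) :
    0 ≤ emptyAgeRatio pt β :=
  div_nonneg (mul_nonneg hpt (sub_nonneg.2 hβ₁)) (add_mul_one_sub_pos hpt hβ₀ hβ₁).le

theorem one_sub_emptyAgeRatio (h : β + pt * (1 - β) ≠ 0) :
    1 - emptyAgeRatio pt β = β / (β + pt * (1 - β)) := by
  rw [emptyAgeRatio, one_sub_div h, add_sub_cancel_right]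

theorem emptyAgeRatio_lt_one (hpt : 0 ≤ pt) (hβ₀ : 0 < β) (hβ₁ : β ≤ 1) :
    emptyAgeRatio pt β < 1 := by
  have hD := add_mul_one_sub_pos hpt hβ₀ hβ₁
  rw [← sub_pos, one_sub_emptyAgeRatio hD.ne']
  exact div_pos hβ₀ hD

end EmptyAgeRatio

namespace IsStationaryT

variable {pt β : ℝ} {ΔT : ℕ} {μ0 μ1 : ℕ → ℝ}

theorem mul_mu0_zero (hμ : IsStationaryT pt β ΔT μ0 μ1) :
    (β + pt * (1 - β)) * μ0 0 = (1 - pt) * (1 - β) * transmissionRate ΔT μ1 := by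
  rw [transmissionRate]
  linear_combination hμ.bal00

theorem mul_mu0_one (hμ : IsStationaryT pt β ΔT μ0 μ1) :
    (β + pt * (1 - β)) * μ0 1 = pt * (1 - β) * (μ0 0 + transmissionRate ΔT μ1) := by
  rw [transmissionRate]
  linear_combination hμ.bal01

theorem mul_mu0_succ (hμ : IsStationaryT pt β ΔT μ0 μ1) {n : ℕ} (hn : 1 ≤ n) :
    (β + pt * (1 - β)) * μ0 (n + 1) = pt * (1 - β) * μ0 n := by
  have h := hμ.bal0 (n + 1) (by omega)
  rw [Nat.add_sub_cancel] at h
  linear_combination h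

theorem mu0_eq_geometric (hμ : IsStationaryT pt β ΔT μ0 μ1) (hD : β + pt * (1 - β) ≠ 0)
    {n : ℕ} (hn : 1 ≤ n) :
    μ0 n = transmissionRate ΔT μ1 / (β + pt * (1 - β)) * emptyAgeRatio pt β ^ n := by
  induction n, hn using Nat.le_induction with
  | base =>
    have h_reset : μ0 0 + transmissionRate ΔT μ1
        = transmissionRate ΔT μ1 / (β + pt * (1 - β)) := by
      rw [eq_div_iff hD]
      linear_combination hμ.mul_mu0_zero
    rw [← h_reset, emptyAgeRatio, pow_one, mul_div_assoc', eq_div_iff hD]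
    linear_combination hμ.mul_mu0_one
  | succ n hn ih =>
    rw [pow_succ, ← mul_assoc, ← ih, emptyAgeRatio, mul_div_assoc', eq_div_iff hD]
    linear_combination hμ.mul_mu0_succ hn

theorem tsum_mu0_nat_add (hμ : IsStationaryT pt β ΔT μ0 μ1) (hpt : 0 ≤ pt) (hβ₀ : 0 < β)
    (hβ₁ : β ≤ 1) {k : ℕ} (hk : 1 ≤ k) :
    ∑' n, μ0 (n + k) = transmissionRate ΔT μ1 * emptyAgeRatio pt β ^ k / β := by
  have hD := (add_mul_one_sub_pos hpt hβ₀ hβ₁).ne'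
  calc ∑' n, μ0 (n + k)
      = ∑' n, transmissionRate ΔT μ1 / (β + pt * (1 - β)) * emptyAgeRatio pt β ^ (n + k) :=
        tsum_congr fun n => hμ.mu0_eq_geometric hD (by omega)
    _ = transmissionRate ΔT μ1 / (β + pt * (1 - β)) * emptyAgeRatio pt β ^ k
          / (1 - emptyAgeRatio pt β) :=
        tsum_const_mul_geometric_nat_add (emptyAgeRatio_nonneg hpt hβ₀ hβ₁)
          (emptyAgeRatio_lt_one hpt hβ₀ hβ₁) _ k
    _ = transmissionRate ΔT μ1 * emptyAgeRatio pt β ^ k / β := by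
        rw [one_sub_emptyAgeRatio hD]
        field_simp

theorem mul_ageMass_zero (hμ : IsStationaryT pt β ΔT μ0 μ1) :
    pt * ageMass μ0 μ1 0 = (1 - pt) * transmissionRate ΔT μ1 := by
  rw [ageMass, transmissionRate]
  linear_combination hμ.bal00 + hμ.bal10

theorem mul_ageMass_eq_transmissionRate (hμ : IsStationaryT pt β ΔT μ0 μ1) {n : ℕ} (hn : 1 ≤ n)
    (hnT : n < ΔT) : pt * ageMass μ0 μ1 n = transmissionRate ΔT μ1 := by
  induction n, hn using Nat.le_induction with
  | base =>
    have h_zero := hμ.mul_ageMass_zero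
    rw [ageMass, transmissionRate] at h_zero ⊢
    linear_combination hμ.bal01 + hμ.bal11 + h_zero
  | succ n hn ih =>
    have h_empty := hμ.bal0 (n + 1) (by omega)
    have h_charged := hμ.bal1mid (n + 1) (by omega) hnT
    rw [Nat.add_sub_cancel] at h_empty h_charged
    rw [← ih (by omega), ageMass, ageMass]
    linear_combination h_empty + h_charged

theorem mul_sum_ageMass (hμ : IsStationaryT pt β ΔT μ0 μ1) (hΔT : 1 ≤ ΔT) :
    pt * ∑ n ∈ Finset.range ΔT, ageMass μ0 μ1 n = (ΔT - pt) * transmissionRate ΔT μ1 := by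
  have h_uniform : ∀ n ∈ Finset.Ico 1 ΔT, pt * ageMass μ0 μ1 n = transmissionRate ΔT μ1 :=
    fun n hn => hμ.mul_ageMass_eq_transmissionRate (Finset.mem_Ico.1 hn).1 (Finset.mem_Ico.1 hn).2
  rw [Finset.mul_sum, Finset.range_eq_Ico, Finset.sum_eq_sum_Ico_succ_bot hΔT,
    Finset.sum_congr rfl h_uniform, hμ.mul_ageMass_zero, Finset.sum_const, Nat.card_Ico,
    nsmul_eq_mul, Nat.cast_sub hΔT]
  push_cast
  ring

theorem sum_ageMass_add_tsum_mu0_add_transmissionRate (hμ : IsStationaryT pt β ΔT μ0 μ1) :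
    ∑ n ∈ Finset.range ΔT, ageMass μ0 μ1 n + ∑' n, μ0 (n + ΔT) + transmissionRate ΔT μ1 = 1 := by
  simp only [ageMass, transmissionRate, Finset.sum_add_distrib]
  linear_combination hμ.total + hμ.summable0.sum_add_tsum_nat_add ΔT
    + hμ.summable1.sum_add_tsum_nat_add ΔT

theorem transmissionRate_eq (hμ : IsStationaryT pt β ΔT μ0 μ1) (hpt : 0 < pt) (hβ₀ : 0 < β)
    (hβ₁ : β ≤ 1) (hΔT : 1 ≤ ΔT) :
    transmissionRate ΔT μ1 = pt * β / (β * ΔT + pt * emptyAgeRatio pt β ^ ΔT) := by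
  have h_total := hμ.sum_ageMass_add_tsum_mu0_add_transmissionRate
  have h_tail := hμ.tsum_mu0_nat_add hpt.le hβ₀ hβ₁ hΔT
  rw [eq_div_iff hβ₀.ne'] at h_tail
  have h_denom : 0 < β * ΔT + pt * emptyAgeRatio pt β ^ ΔT :=
    add_pos_of_pos_of_nonneg (mul_pos hβ₀ (Nat.cast_pos.2 hΔT))
      (mul_nonneg hpt.le (pow_nonneg (emptyAgeRatio_nonneg hpt.le hβ₀ hβ₁) ΔT))
  rw [eq_div_iff h_denom.ne']
  linear_combination pt * β * h_total - β * hμ.mul_sum_ageMass hΔT - pt * h_tail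

end IsStationaryT

/-- for threshold `ΔT ≥ 2`,
`μ(0,0) = p_t·p̄_t·β·β̄ / ((β + p_t·β̄)·[β·ΔT + p_t·((p_t·β̄)/(β + p_t·β̄))^ΔT])`. -/
theorem stationary_T_mu00
    (pt β : ℝ) (hpt : 0 < pt ∧ pt < 1) (hβ : 0 < β ∧ β < 1)
    (ΔT : ℕ) (hΔT : 2 ≤ ΔT)
    (μ0 μ1 : ℕ → ℝ) (hμ : IsStationaryT pt β ΔT μ0 μ1) :
    μ0 0 = (pt * (1 - pt) * β * (1 - β))
      / ((β + pt * (1 - β))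
          * (β * ΔT + pt * ((pt * (1 - β)) / (β + pt * (1 - β))) ^ ΔT)) := by
  have hD : β + pt * (1 - β) ≠ 0 := (add_mul_one_sub_pos hpt.1.le hβ.1 hβ.2.le).ne'
  calc μ0 0
      = (1 - pt) * (1 - β) * transmissionRate ΔT μ1 / (β + pt * (1 - β)) := by
        rw [eq_div_iff hD, mul_comm, hμ.mul_mu0_zero]
    _ = (1 - pt) * (1 - β) * (pt * β / (β * ΔT + pt * emptyAgeRatio pt β ^ ΔT))
          / (β + pt * (1 - β)) := by
        rw [hμ.transmissionRate_eq hpt.1 hβ.1 hβ.2.le (one_le_two.trans hΔT)]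
    _ = _ := by
        rw [emptyAgeRatio, mul_div_assoc', div_div]
        ring
end
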